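/- Let k be a field of characteristic 0, S = k[x,y,z,u,v,t] acting by contraction on Q_S = k[X,Y,Z,U,V,T], F = T·(XU^2 + YUV + ZV^2) + X^2·U·V + X·Y·V^2 ∈ Q_S, and C = S/Ann_S(F), a graded Artinian Gorenstein algebra with Hilbert function (1,6,10,6,1). Then C is strong Lefschetz: there exists a linear form ℓ ∈ C_1 such that for all i, k ≥ 0 the map ×ℓ^k : C_i → C_{i+k} has maximal rank min(dim_k C_i, dim_k C_{i+k}); equivalently the generic linear Jordan type of C is (5,3,3,3,3,3,1,1,1,1), the conjugate of its Hilbert function. (Thus C is a strong Lefschetz free extension of k[t]/(t^2) whose fiber B = k[x,y,z,u,v]/Ann(XU^2+YUV+ZV^2) is not strong Lefschetz, answering Watanabe's question in the standard graded case in the negative.) -/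

import Mathlib

set_option synthInstance.maxHeartbeats 1000000
set_option maxHeartbeats 1000000

open Classical in
/-- Contraction action of `k[x_1,…]` on `k[X_1,…]` (the two polynomial rings being
identified): determined on monomials by `x^a ∘ X^b = X^{b-a}` if `a ≤ b` componentwise,
and `0` otherwise. -/
noncomputable def contract {k : Type*} [CommRing k] {σ : Type*}
    (f F : MvPolynomial σ k) : MvPolynomial σ k :=
  ∑ b ∈ F.support, ∑ a ∈ f.support,
    if a ≤ b then
      MvPolynomial.monomial (b - a) (MvPolynomial.coeff a f * MvPolynomial.coeff b F)
    else 0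

/-- The annihilator `Ann F = {f : f ∘ F = 0}` of `F` under contraction, as an ideal. -/
noncomputable def annIdeal {k : Type*} [CommRing k] {σ : Type*}
    (F : MvPolynomial σ k) : Ideal (MvPolynomial σ k) :=
  Ideal.span {f | contract f F = 0}

/-- The Perazzo cubic `F_B = XU² + YUV + ZV²` in `k[X,Y,Z,U,V]`
(variables `x,y,z,u,v = X 0,…,X 4`). -/
noncomputable def perazzoCubic (k : Type*) [Field k] : MvPolynomial (Fin 5) k :=
  MvPolynomial.X 0 * MvPolynomial.X 3 ^ 2 +
    MvPolynomial.X 1 * MvPolynomial.X 3 * MvPolynomial.X 4 +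
    MvPolynomial.X 2 * MvPolynomial.X 4 ^ 2

/-- The quartic `G = X²UV + XYV²` in `k[X,Y,Z,U,V]`. -/
noncomputable def perazzoG (k : Type*) [Field k] : MvPolynomial (Fin 5) k :=
  MvPolynomial.X 0 ^ 2 * MvPolynomial.X 3 * MvPolynomial.X 4 +
    MvPolynomial.X 0 * MvPolynomial.X 1 * MvPolynomial.X 4 ^ 2

/-- `F = T·F_B + G ∈ k[X,Y,Z,U,V,T]` (with `T = X 5` the last variable). -/
noncomputable def perazzoF (k : Type*) [Field k] : MvPolynomial (Fin 6) k :=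
  MvPolynomial.X (Fin.last 5) * MvPolynomial.rename Fin.castSucc (perazzoCubic k) +
    MvPolynomial.rename Fin.castSucc (perazzoG k)

/-- The induced grading on the quotient `C = S/Ann_S(F)`. -/
noncomputable def perazzoCGrade (k : Type*) [Field k] (d : ℕ) :
    Submodule k (MvPolynomial (Fin 6) k ⧸ annIdeal (perazzoF k)) :=
  (MvPolynomial.homogeneousSubmodule (Fin 6) k d).map
    (Ideal.Quotient.mkₐ k (annIdeal (perazzoF k))).toLinearMap

/-! The functional `ψ : f ↦ (f ∘ F)(0)` makes `C` a graded Frobenius algebra of socle degree `4`, so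
the pairings `Cᵢ × C₄₋ᵢ → k` are perfect. Hence the dimensions of the `Cᵢ` are read off monomials
whose pairing matrix is the identity, and `ℓ` is strong Lefschetz as soon as `ℓ⁴ : C₀ → C₄` and
`ℓ² : C₁ → C₃` are injective, every other power of `ℓ` being a first or last factor of one of these
or of the identity of `C₂`. For `ℓ = x + u + v` the two conditions say that the value `ψ (ℓ⁴) = 12`
and the determinant `-9` of the higher Hessian `ψ (ℓ² xᵢ xⱼ)` are nonzero in `k`. Finally, since
`ℓ` is homogeneous, the Jordan type is obtained by adding up the ranks of its powers over the
degrees. -/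

open MvPolynomial Module

section Frobenius

variable {k A : Type*} [Field k]

lemma finrank_iSup_eq_sum {V ι : Type*} [AddCommGroup V] [Module k V] [Module.Finite k V]
    [Fintype ι] {U : ι → Submodule k V} (hU : iSupIndep U) :
    finrank k (⨆ i, U i : Submodule k V) = ∑ i, finrank k (U i) := by
  classical
  rw [← finrank_directSum, Submodule.iSup_eq_range_dfinsupp_lsum]
  exact LinearMap.finrank_range_of_inj hU.dfinsupp_lsum_injective

variable [CommRing A] [Algebra k A]

lemma map_mulLeft_pow_add (p : Submodule k A) (ℓ : A) (a b : ℕ) :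
    p.map (LinearMap.mulLeft k (ℓ ^ (a + b))) =
      (p.map (LinearMap.mulLeft k (ℓ ^ b))).map (LinearMap.mulLeft k (ℓ ^ a)) := by
  rw [← Submodule.map_comp, pow_add, LinearMap.mulLeft_mul]

section Gram

variable {ι : Type*} [Fintype ι] [DecidableEq ι]

lemma linearIndependent_of_gram_det_ne_zero (ψ : A →ₗ[k] k) {v w : ι → A}
    (hdet : (Matrix.of fun i j ↦ ψ (v i * w j)).det ≠ 0) : LinearIndependent k v := by
  rw [Fintype.linearIndependent_iff]
  intro c hc
  refine congrFun (Matrix.eq_zero_of_vecMul_eq_zero hdet (funext fun j ↦ ?_))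
  calc ∑ i, c i * ψ (v i * w j) = ψ ((∑ i, c i • v i) * w j) := by
        simp only [Finset.sum_mul, map_sum, smul_mul_assoc, map_smul, smul_eq_mul]
    _ = 0 := by rw [hc, zero_mul, map_zero]

lemma finrank_map_mulLeft_span (ψ : A →ₗ[k] k) {v w : ι → A} {a : A}
    (hdet : (Matrix.of fun i j ↦ ψ (a * v i * w j)).det ≠ 0) :
    finrank k ((Submodule.span k (Set.range v)).map (LinearMap.mulLeft k a)) =
      Fintype.card ι := by
  rw [Submodule.map_span, ← Set.range_comp]
  exact finrank_span_eq_card (linearIndependent_of_gram_det_ne_zero ψ hdet)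

lemma finrank_span_of_dual (ψ : A →ₗ[k] k) {v w : ι → A}
    (hdual : ∀ i j, ψ (v i * w j) = if i = j then 1 else 0) :
    finrank k (Submodule.span k (Set.range v)) = Fintype.card ι := by
  refine finrank_span_eq_card (linearIndependent_of_gram_det_ne_zero ψ (w := w) ?_)
  have hgram : (Matrix.of fun i j ↦ ψ (v i * w j)) = 1 := by
    ext i j
    rw [Matrix.of_apply, hdual, Matrix.one_apply]
  rw [hgram, Matrix.det_one]
  exact one_ne_zero

end Gram

/-- `ℓ` is a strong Lefschetz element for the family `U` of graded pieces: every power of `ℓ`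
acts with maximal rank on every piece. -/
def IsStrongLefschetz (U : ℕ → Submodule k A) (ℓ : A) : Prop :=
  ∀ i m : ℕ, finrank k ((U i).map (LinearMap.mulLeft k (ℓ ^ m))) =
    min (finrank k (U i)) (finrank k (U (i + m)))

/-- A graded commutative Frobenius algebra of socle degree `n`: the pieces `U i` multiply as
degrees add and span `A`, and the functional `ψ`, concentrated in degree `n`, makes
`(x, y) ↦ ψ (x * y)` nondegenerate. Graded Artinian Gorenstein algebras are of this form, and
directness of the sum of the `U i` is a consequence (`IsGradedFrobenius.iSupIndep_pieces`). -/
structure IsGradedFrobenius (U : ℕ → Submodule k A) (ψ : A →ₗ[k] k) (n : ℕ) : Prop where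
  mul_mem {i j : ℕ} {x y : A} : x ∈ U i → y ∈ U j → x * y ∈ U (i + j)
  iSup_eq_top : ⨆ i, U i = ⊤
  apply_eq_zero {i : ℕ} {x : A} : x ∈ U i → i ≠ n → ψ x = 0
  eq_zero_of_forall_apply_mul {x : A} : (∀ y, ψ (x * y) = 0) → x = 0

namespace IsGradedFrobenius

variable {U : ℕ → Submodule k A} {ψ : A →ₗ[k] k} {n : ℕ} (hU : IsGradedFrobenius U ψ n)

include hU

lemma eq_zero_of_mem {i : ℕ} {x : A} (hx : x ∈ U i)
    (h : ∀ j, i + j = n → ∀ y ∈ U j, ψ (x * y) = 0) : x = 0 := by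
  refine hU.eq_zero_of_forall_apply_mul fun y ↦ ?_
  have hy : y ∈ ⨆ j, U j := hU.iSup_eq_top ▸ Submodule.mem_top
  induction hy using Submodule.iSup_induction' with
  | mem j y hy =>
    by_cases hij : i + j = n
    · exact h j hij y hy
    · exact hU.apply_eq_zero (hU.mul_mem hx hy) hij
  | zero => rw [mul_zero, map_zero]
  | add y z _ _ hy hz => rw [mul_add, map_add, hy, hz, add_zero]

lemma eq_bot_of_lt {i : ℕ} (hi : n < i) : U i = ⊥ :=
  (Submodule.eq_bot_iff (U i)).2 fun _ hx ↦ hU.eq_zero_of_mem hx fun j hj ↦ by omega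

lemma finrank_eq_zero_of_lt {i : ℕ} (hi : n < i) : finrank k (U i) = 0 := by
  rw [hU.eq_bot_of_lt hi, finrank_bot]

lemma iSupIndep_pieces : iSupIndep U := by
  rw [iSupIndep_iff_finsetSum_eq_zero_imp_eq_zero]
  intro s v hv hsum d hd
  refine hU.eq_zero_of_mem (hv d hd) fun j hj y hy ↦ ?_
  calc
    ψ (v d * y) = ∑ i ∈ s, ψ (v i * y) := by
      refine (Finset.sum_eq_single_of_mem (f := fun i ↦ ψ (v i * y)) d hd fun i hi hid ↦ ?_).symm
      exact hU.apply_eq_zero (hU.mul_mem (hv i hi) hy) (by omega)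
    _ = ψ ((∑ i ∈ s, v i) * y) := by rw [Finset.sum_mul, map_sum]
    _ = 0 := by rw [hsum, zero_mul, map_zero]

lemma iSup_fin_eq_top : ⨆ i : Fin (n + 1), U i = ⊤ := by
  rw [eq_top_iff, ← hU.iSup_eq_top]
  refine iSup_le fun i ↦ ?_
  rcases lt_or_ge n i with hi | hi
  · exact (hU.eq_bot_of_lt hi).le.trans bot_le
  · exact le_iSup_of_le (⟨i, by omega⟩ : Fin (n + 1)) le_rfl

lemma map_mulLeft_pow_le {ℓ : A} (hℓ : ℓ ∈ U 1) (i m : ℕ) :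
    (U i).map (LinearMap.mulLeft k (ℓ ^ m)) ≤ U (i + m) := by
  rintro _ ⟨x, hx, rfl⟩
  rw [LinearMap.mulLeft_apply]
  induction m with
  | zero => rwa [pow_zero, one_mul]
  | succ m ih =>
    rw [pow_succ', mul_assoc, ← add_assoc, add_comm]
    exact hU.mul_mem hℓ ih

variable [∀ i, Module.Finite k (U i)]

lemma finrank_le_of_add_eq {i j : ℕ} (hij : i + j = n) : finrank k (U i) ≤ finrank k (U j) := by
  let pairing : U i →ₗ[k] Dual k (U j) :=
    ((LinearMap.mul k A).compr₂ ψ).domRestrict₁₂ (U i) (U j)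
  rw [← Subspace.dual_finrank_eq (V := U j)]
  refine LinearMap.finrank_le_finrank_of_injective (f := pairing) ?_
  rw [injective_iff_map_eq_zero]
  intro x hx
  refine Subtype.ext (hU.eq_zero_of_mem x.2 fun j' hj' y hy ↦ ?_)
  obtain rfl : j' = j := by omega
  exact LinearMap.congr_fun hx ⟨y, hy⟩

lemma finrank_eq_of_add_eq {i j : ℕ} (hij : i + j = n) : finrank k (U i) = finrank k (U j) :=
  (hU.finrank_le_of_add_eq hij).antisymm (hU.finrank_le_of_add_eq (by omega))

/- A power of `ℓ` is either the first or the last factor of some map `ℓ ^ (n - 2 * i)`, which is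
bijective since `U i` and `U (n - i)` have the same dimension. -/
theorem isStrongLefschetz {ℓ : A} (hℓ : ℓ ∈ U 1)
    (hmid : ∀ i, 2 * i ≤ n →
      finrank k ((U i).map (LinearMap.mulLeft k (ℓ ^ (n - 2 * i)))) = finrank k (U i)) :
    IsStrongLefschetz U ℓ := by
  intro i m
  refine le_antisymm (le_min (Submodule.finrank_map_le _ _)
    (Submodule.finrank_mono (hU.map_mulLeft_pow_le hℓ i m))) ?_
  rcases lt_or_ge n (i + m) with htop | htop
  · exact min_le_of_right_le ((hU.finrank_eq_zero_of_lt htop).trans_le (Nat.zero_le _))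
  rcases le_total (2 * i + m) n with hlow | hhigh
  · refine min_le_of_left_le ?_
    rw [← hmid i (by omega), show n - 2 * i = n - 2 * i - m + m by omega, map_mulLeft_pow_add]
    exact Submodule.finrank_map_le _ _
  · obtain ⟨j, hj⟩ : ∃ j, j + (i + m) = n := ⟨n - (i + m), by omega⟩
    have hji : j + (i - j) = i := by omega
    refine min_le_of_right_le ?_
    rw [← hU.finrank_eq_of_add_eq hj, ← hmid j (by omega),
      show n - 2 * j = m + (i - j) by omega, map_mulLeft_pow_add]
    refine Submodule.finrank_mono (Submodule.map_mono ?_)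
    exact (hU.map_mulLeft_pow_le hℓ j (i - j)).trans_eq (by rw [hji])

lemma module_finite : Module.Finite k A := by
  rw [Module.finite_def, ← hU.iSup_fin_eq_top]
  exact Submodule.fg_iSup _ fun i ↦ Module.Finite.iff_fg.1 inferInstance

lemma finrank_eq_sum : finrank k A = ∑ i : Fin (n + 1), finrank k (U i) := by
  have := hU.module_finite
  have hindep : iSupIndep fun i : Fin (n + 1) ↦ U i := hU.iSupIndep_pieces.comp Fin.val_injective
  rw [← finrank_iSup_eq_sum hindep, hU.iSup_fin_eq_top, finrank_top]

lemma finrank_range_mulLeft_pow {ℓ : A} (hℓ : ℓ ∈ U 1) (hSL : IsStrongLefschetz U ℓ) (m : ℕ) :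
    finrank k (LinearMap.range (LinearMap.mulLeft k (ℓ ^ m))) =
      ∑ i : Fin (n + 1), min (finrank k (U i)) (finrank k (U (i + m))) := by
  have := hU.module_finite
  have hshift : Function.Injective fun i : Fin (n + 1) ↦ (i : ℕ) + m :=
    (add_left_injective m).comp Fin.val_injective
  have hindep : iSupIndep fun i : Fin (n + 1) ↦
      (U i).map (LinearMap.mulLeft k (ℓ ^ m)) :=
    (hU.iSupIndep_pieces.comp hshift).mono fun i ↦ hU.map_mulLeft_pow_le hℓ i m
  rw [LinearMap.range_eq_map, ← hU.iSup_fin_eq_top, Submodule.map_iSup,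
    finrank_iSup_eq_sum hindep]
  exact Finset.sum_congr rfl fun i _ ↦ hSL i m

/- Each difference is the kernel of `ℓ ^ m` in degree `i`; truncation gives `0` where it is
injective. -/
theorem finrank_ker_mulLeft_pow {ℓ : A} (hℓ : ℓ ∈ U 1) (hSL : IsStrongLefschetz U ℓ) (m : ℕ) :
    finrank k (LinearMap.ker (LinearMap.mulLeft k ℓ ^ m)) =
      ∑ i : Fin (n + 1), (finrank k (U i) - finrank k (U (i + m))) := by
  have := hU.module_finite
  have hrank := LinearMap.finrank_range_add_finrank_ker (LinearMap.mulLeft k (ℓ ^ m))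
  rw [hU.finrank_range_mulLeft_pow hℓ hSL, hU.finrank_eq_sum] at hrank
  rw [LinearMap.pow_mulLeft]
  refine Nat.add_left_cancel (hrank.trans ?_)
  rw [← Finset.sum_add_distrib]
  exact Finset.sum_congr rfl fun i _ ↦ by omega

end IsGradedFrobenius

end Frobenius

section MacaulayDuality

variable {k σ : Type*}

section CommRing

variable [CommRing k]

/-- The functional `f ↦ (f ∘ F)(0)` attached to a Macaulay dual generator `F`; on monomials it
reads off the coefficients of `F`. -/
noncomputable def dualFunctional (F : MvPolynomial σ k) : MvPolynomial σ k →ₗ[k] k :=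
  ∑ b ∈ F.support, coeff b F • lcoeff k b

lemma dualFunctional_apply (F f : MvPolynomial σ k) :
    dualFunctional F f = ∑ b ∈ F.support, coeff b F * coeff b f := by
  simp only [dualFunctional, LinearMap.sum_apply, LinearMap.smul_apply, lcoeff_apply, smul_eq_mul]

lemma dualFunctional_monomial (F : MvPolynomial σ k) (b : σ →₀ ℕ) :
    dualFunctional F (monomial b 1) = coeff b F := by
  classical
  rw [dualFunctional_apply]
  simp only [coeff_monomial, mul_ite, mul_one, mul_zero, Finset.sum_ite_eq, ite_eq_left_iff]
  exact fun hb ↦ (notMem_support_iff.1 hb).symm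

lemma coeff_ite_monomial_tsub (a b c : σ →₀ ℕ) (r : k) [Decidable (a ≤ b)]
    [Decidable (a + c = b)] :
    coeff c (if a ≤ b then monomial (b - a) r else 0) = if a + c = b then r else 0 := by
  classical
  by_cases hab : a ≤ b
  · simp only [if_pos hab, coeff_monomial, tsub_eq_iff_eq_add_of_le hab, add_comm c, eq_comm]
  · rw [if_neg hab, coeff_zero, if_neg]
    rintro rfl
    exact hab le_self_add

lemma coeff_contract (F f : MvPolynomial σ k) (c : σ →₀ ℕ) :
    coeff c (contract f F) = dualFunctional F (f * monomial c 1) := by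
  classical
  rw [dualFunctional_apply, contract, coeff_sum]
  refine Finset.sum_congr rfl fun b _ ↦ ?_
  simp only [coeff_sum, coeff_ite_monomial_tsub, coeff_mul_monomial', mul_one]
  split_ifs with hcb
  · simp only [← eq_tsub_iff_add_eq_of_le hcb, Finset.sum_ite_eq', mul_comm (coeff b F),
      ite_eq_left_iff]
    exact fun h ↦ by rw [notMem_support_iff.1 h, zero_mul]
  · rw [mul_zero]
    refine Finset.sum_eq_zero fun a _ ↦ if_neg ?_
    rintro rfl
    exact hcb le_add_self

lemma contract_eq_zero_iff (F f : MvPolynomial σ k) :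
    contract f F = 0 ↔ ∀ g, dualFunctional F (f * g) = 0 := by
  constructor
  · intro h g
    have hzero : dualFunctional F ∘ₗ LinearMap.mulLeft k f = 0 := by
      refine AddMonoidAlgebra.lhom_ext' fun c ↦ LinearMap.ext_ring ?_
      change dualFunctional F (f * monomial c 1) = 0
      rw [← coeff_contract, h, coeff_zero]
    exact LinearMap.congr_fun hzero g
  · intro h
    ext c
    rw [coeff_contract, h, coeff_zero]

lemma mem_annIdeal_iff (F f : MvPolynomial σ k) :
    f ∈ annIdeal F ↔ ∀ g, dualFunctional F (f * g) = 0 := by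
  refine ⟨fun hf ↦ ?_, fun h ↦ Ideal.subset_span ((contract_eq_zero_iff F f).2 h)⟩
  induction hf using Submodule.span_induction with
  | mem f hf => exact (contract_eq_zero_iff F f).1 hf
  | zero => intro g; rw [zero_mul, map_zero]
  | add f₁ f₂ _ _ h₁ h₂ => intro g; rw [add_mul, map_add, h₁, h₂, add_zero]
  | smul a f _ hf => intro g; rw [smul_eq_mul, mul_comm a, mul_assoc, hf]

lemma dualFunctional_eq_zero_of_isHomogeneous {F f : MvPolynomial σ k} {n d : ℕ}
    (hF : F.IsHomogeneous n) (hf : f.IsHomogeneous d) (hd : d ≠ n) :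
    dualFunctional F f = 0 := by
  rw [dualFunctional_apply]
  refine Finset.sum_eq_zero fun b hb ↦ ?_
  have hbn : b.degree = n := by
    by_contra hne
    exact MvPolynomial.mem_support_iff.1 hb (hF.coeff_eq_zero hne)
  rw [hf.coeff_eq_zero (hbn.trans_ne hd.symm), mul_zero]

/-- The functional induced by `dualFunctional F` on `k[x] / Ann F`. -/
noncomputable def quotientFunctional (F : MvPolynomial σ k) :
    (MvPolynomial σ k ⧸ annIdeal F) →ₗ[k] k :=
  ((annIdeal F).restrictScalars k).liftQ (dualFunctional F)
      (fun f hf ↦ by simpa using (mem_annIdeal_iff F f).1 hf 1) ∘ₗ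
    (Submodule.Quotient.restrictScalarsEquiv k (annIdeal F)).symm.toLinearMap

lemma quotientFunctional_mk (F f : MvPolynomial σ k) :
    quotientFunctional F (Ideal.Quotient.mkₐ k (annIdeal F) f) = dualFunctional F f := rfl

/-- The degree `d` piece of `k[x] / Ann F`. -/
noncomputable def quotientGrade (F : MvPolynomial σ k) (d : ℕ) :
    Submodule k (MvPolynomial σ k ⧸ annIdeal F) :=
  (homogeneousSubmodule σ k d).map (Ideal.Quotient.mkₐ k (annIdeal F)).toLinearMap

instance quotientGrade_finite [Finite σ] (F : MvPolynomial σ k) (d : ℕ) :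
    Module.Finite k (quotientGrade F d) :=
  Module.Finite.iff_fg.2 ((homogeneousSubmodule_fg σ k d).map _)

end CommRing

theorem isGradedFrobenius_quotient [Field k] {F : MvPolynomial σ k} {n : ℕ}
    (hF : F.IsHomogeneous n) : IsGradedFrobenius (quotientGrade F) (quotientFunctional F) n where
  mul_mem := by
    rintro i j _ _ ⟨f, hf, rfl⟩ ⟨g, hg, rfl⟩
    exact ⟨f * g, IsHomogeneous.mul hf hg, map_mul (Ideal.Quotient.mkₐ k (annIdeal F)) f g⟩
  iSup_eq_top := by
    rw [eq_top_iff]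
    intro x _
    obtain ⟨f, rfl⟩ := Ideal.Quotient.mkₐ_surjective k _ x
    rw [← sum_homogeneousComponent f, map_sum]
    exact Submodule.sum_mem _ fun d _ ↦ Submodule.mem_iSup_of_mem d
      ⟨_, homogeneousComponent_mem d f, rfl⟩
  apply_eq_zero := by
    rintro i _ ⟨f, hf, rfl⟩ hi
    exact dualFunctional_eq_zero_of_isHomogeneous hF hf hi
  eq_zero_of_forall_apply_mul := by
    intro x hx
    obtain ⟨f, rfl⟩ := Ideal.Quotient.mkₐ_surjective k _ x
    exact Ideal.Quotient.eq_zero_iff_mem.2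
      ((mem_annIdeal_iff F f).2 fun g ↦ hx (Ideal.Quotient.mkₐ k (annIdeal F) g))

section MonomialClass

variable [DecidableEq σ]

/-- The class in `k[x] / Ann F` of the monomial `∏ i ∈ s, x i`. Exponents are multisets so that
identities between concrete monomials are decidable. -/
noncomputable def monomialClass [CommRing k] (F : MvPolynomial σ k) (s : Multiset σ) :
    MvPolynomial σ k ⧸ annIdeal F :=
  Ideal.Quotient.mkₐ k (annIdeal F) (monomial (Multiset.toFinsupp s) 1)

section CommRing

variable [CommRing k] (F : MvPolynomial σ k)

lemma monomialClass_zero : monomialClass F 0 = 1 := by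
  rw [monomialClass, map_zero]
  exact map_one (Ideal.Quotient.mkₐ k (annIdeal F))

lemma monomialClass_add (s t : Multiset σ) :
    monomialClass F (s + t) = monomialClass F s * monomialClass F t := by
  simp only [monomialClass, ← map_mul, monomial_mul, map_add, mul_one]

lemma quotientFunctional_monomialClass (s : Multiset σ) :
    quotientFunctional F (monomialClass F s) = coeff (Multiset.toFinsupp s) F :=
  (quotientFunctional_mk F _).trans (dualFunctional_monomial F _)

lemma quotientGrade_eq_span (d : ℕ) :
    quotientGrade F d = Submodule.span k (monomialClass F '' {s | s.card = d}) := by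
  have himage : {b : σ →₀ ℕ | b.degree = d} = Multiset.toFinsupp '' {s | s.card = d} := by
    ext b
    obtain ⟨s, rfl⟩ := Multiset.toFinsupp.surjective b
    rw [Multiset.toFinsupp.injective.mem_set_image]
    simp only [Set.mem_ofPred_eq, Finsupp.degree_apply]
    rw [← Multiset.toFinsupp_sum_eq]
    rfl
  rw [quotientGrade, homogeneousSubmodule_eq_finsupp_supported,
    AddMonoidAlgebra.supported_eq_span_single, Submodule.map_span, himage, Set.image_image,
    Set.image_image]
  rfl

lemma monomialClass_mem_quotientGrade (s : Multiset σ) :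
    monomialClass F s ∈ quotientGrade F s.card := by
  rw [quotientGrade_eq_span]
  exact Submodule.subset_span ⟨s, rfl, rfl⟩

end CommRing

lemma quotientGrade_ext [Field k] {F : MvPolynomial σ k} {n i j : ℕ} (hF : F.IsHomogeneous n)
    (hij : i + j = n) {x y : MvPolynomial σ k ⧸ annIdeal F} (hx : x ∈ quotientGrade F i)
    (hy : y ∈ quotientGrade F i) (h : ∀ s : Multiset σ, s.card = j →
      quotientFunctional F (x * monomialClass F s) =
        quotientFunctional F (y * monomialClass F s)) : x = y := by
  rw [← sub_eq_zero]
  refine (isGradedFrobenius_quotient hF).eq_zero_of_mem (sub_mem hx hy) fun j' hj' z hz ↦ ?_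
  obtain rfl : j' = j := by omega
  rw [quotientGrade_eq_span] at hz
  induction hz using Submodule.span_induction with
  | mem _ hs =>
    obtain ⟨s, hs, rfl⟩ := hs
    rw [sub_mul, map_sub, h s hs, sub_self]
  | zero => rw [mul_zero, map_zero]
  | add z₁ z₂ _ _ h₁ h₂ => rw [mul_add, map_add, h₁, h₂, add_zero]
  | smul c z _ hz => rw [mul_smul_comm, map_smul, hz, smul_zero]

end MonomialClass

end MacaulayDuality

section Perazzo

/-- The monomials of `F = T·(XU² + YUV + ZV²) + X²UV + XYV²`, as multisets of variable indices,
where `x, y, z, u, v, t` are numbered `0, …, 5`. -/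
def perazzoTerms : Finset (Multiset (Fin 6)) :=
  {{5, 0, 3, 3}, {5, 1, 3, 4}, {5, 2, 4, 4}, {0, 0, 3, 4}, {0, 1, 4, 4}}

/-- The quadrics `t·xᵢ` followed by complements of theirs in the terms of `F`. Their classes form
a basis of `C₂ ≅ t·B₁ ⊕ B₂`, and swapping the two summands gives the dual basis. -/
def perazzoQuadric : Fin 5 ⊕ Fin 5 → Multiset (Fin 6) :=
  Sum.elim ![{5, 0}, {5, 1}, {5, 2}, {5, 3}, {5, 4}] ![{3, 3}, {3, 4}, {4, 4}, {0, 3}, {1, 3}]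

/-- Cubic monomials whose classes are dual to the variables under the pairing of `C`. -/
def perazzoDualCubic : Fin 6 → Multiset (Fin 6) :=
  ![{5, 3, 3}, {5, 3, 4}, {5, 4, 4}, {5, 0, 3}, {0, 1, 4}, {0, 3, 3}]

/-- The indices of the variables in the linear form `x + u + v`. -/
def lefschetzSupport : Finset (Fin 6) := {0, 3, 4}

/-- The matrix of the bilinear form `(a, b) ↦ ψ (ℓ² a b)` on `C₁`, for `ℓ = x + u + v`. -/
def perazzoHessian : Matrix (Fin 6) (Fin 6) ℤ :=
  !![2, 1, 0, 2, 2, 1;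
     1, 0, 0, 0, 2, 2;
     0, 0, 0, 0, 0, 1;
     2, 0, 0, 0, 1, 2;
     2, 2, 0, 1, 0, 0;
     1, 2, 1, 2, 0, 0]

lemma perazzoHessian_eq_of : perazzoHessian =
    Matrix.of fun i j ↦ ∑ a ∈ lefschetzSupport, ∑ b ∈ lefschetzSupport,
      if {a} + {b} + {i} + {j} ∈ perazzoTerms then 1 else 0 := by
  decide +kernel

lemma det_perazzoHessian : perazzoHessian.det = -9 := by
  simp [perazzoHessian, Matrix.det_succ_row_zero, Fin.sum_univ_succ, Fin.succAbove]

lemma sum_perazzoHessian :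
    ∑ i ∈ lefschetzSupport, ∑ j ∈ lefschetzSupport, perazzoHessian i j = 12 := by decide +kernel

lemma card_of_mem_perazzoTerms : ∀ s ∈ perazzoTerms, s.card = 4 := by decide

lemma card_perazzoQuadric : ∀ n, (perazzoQuadric n).card = 2 := by decide

lemma perazzoQuadric_add_swap_mem_iff : ∀ m n,
    perazzoQuadric m + perazzoQuadric n.swap ∈ perazzoTerms ↔ m = n := by decide +kernel

lemma singleton_add_perazzoDualCubic_mem_iff : ∀ i j,
    {i} + perazzoDualCubic j ∈ perazzoTerms ↔ i = j := by decide +kernel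

lemma notMem_perazzoTerms_or_exists_perazzoQuadric : ∀ i j : Fin 6,
    (∀ a b, {i, j} + {a, b} ∉ perazzoTerms) ∨
      ∃ n, ∀ a b, {i, j} + {a, b} ∈ perazzoTerms ↔ perazzoQuadric n + {a, b} ∈ perazzoTerms := by
  decide +kernel

variable (k : Type*) [Field k]

lemma perazzoF_eq_sum :
    perazzoF k = ∑ s ∈ perazzoTerms, monomial (Multiset.toFinsupp s) 1 := by
  have hmonomial (s : Multiset (Fin 6)) :
      monomial (Multiset.toFinsupp s) (1 : k) = (s.map X).prod := by
    induction s using Multiset.induction_on with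
    | empty => rfl
    | cons a s ih =>
      rw [Multiset.map_cons, Multiset.prod_cons, ← ih, X, monomial_mul,
        ← Multiset.singleton_add, map_add, Multiset.toFinsupp_singleton, one_mul]
  simp_rw [hmonomial, perazzoTerms]
  rw [Finset.sum_insert (by decide), Finset.sum_insert (by decide), Finset.sum_insert (by decide),
    Finset.sum_insert (by decide), Finset.sum_singleton]
  simp only [perazzoF, perazzoCubic, perazzoG, map_add, map_mul, map_pow, rename_X,
    Multiset.insert_eq_cons, Multiset.map_cons, Multiset.map_singleton, Multiset.prod_cons,
    Multiset.prod_singleton, Fin.reduceLast, Fin.reduceCastSucc, Fin.castSucc_zero]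
  ring

lemma perazzoF_isHomogeneous : (perazzoF k).IsHomogeneous 4 := by
  rw [perazzoF_eq_sum]
  refine IsHomogeneous.sum _ _ _ fun s hs ↦ isHomogeneous_monomial _ ?_
  rw [Finsupp.degree_apply, ← card_of_mem_perazzoTerms s hs]
  exact Multiset.toFinsupp_sum_eq s

/-- The class in `C` of the monomial `∏ i ∈ s, xᵢ`. -/
noncomputable abbrev perazzoClass (s : Multiset (Fin 6)) :
    MvPolynomial (Fin 6) k ⧸ annIdeal (perazzoF k) :=
  monomialClass (perazzoF k) s

/-- The orientation `C → k` that makes `C` a graded Frobenius algebra. -/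
noncomputable abbrev perazzoFunctional :
    (MvPolynomial (Fin 6) k ⧸ annIdeal (perazzoF k)) →ₗ[k] k :=
  quotientFunctional (perazzoF k)

lemma perazzoCGrade_isGradedFrobenius :
    IsGradedFrobenius (perazzoCGrade k) (perazzoFunctional k) 4 :=
  isGradedFrobenius_quotient (perazzoF_isHomogeneous k)

instance perazzoCGrade_finite (d : ℕ) : Module.Finite k (perazzoCGrade k d) :=
  quotientGrade_finite (perazzoF k) d

lemma perazzoFunctional_perazzoClass (s : Multiset (Fin 6)) :
    perazzoFunctional k (perazzoClass k s) = if s ∈ perazzoTerms then 1 else 0 := by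
  classical
  rw [quotientFunctional_monomialClass, perazzoF_eq_sum]
  simp only [coeff_sum, coeff_monomial, Multiset.toFinsupp.injective.eq_iff, Finset.sum_ite_eq']

lemma perazzoCGrade_zero_eq_span :
    perazzoCGrade k 0 = Submodule.span k (Set.range fun _ : Unit ↦ perazzoClass k 0) := by
  refine (quotientGrade_eq_span _ 0).trans ?_
  simp only [Multiset.card_eq_zero, Set.ofPred_eq_eq_singleton, Set.image_singleton,
    Set.range_const]

lemma perazzoCGrade_one_eq_span :
    perazzoCGrade k 1 = Submodule.span k (Set.range fun i ↦ perazzoClass k {i}) := by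
  have hcard : {s : Multiset (Fin 6) | s.card = 1} = Set.range fun i ↦ {i} := by
    ext s
    simp only [Set.mem_ofPred_eq, Multiset.card_eq_one, Set.mem_range, eq_comm (a := s)]
  refine (quotientGrade_eq_span _ 1).trans ?_
  rw [hcard, ← Set.range_comp]
  rfl

lemma perazzoCGrade_two_eq_span :
    perazzoCGrade k 2 = Submodule.span k (Set.range fun n ↦ perazzoClass k (perazzoQuadric n)) := by
  have hmem (s : Multiset (Fin 6)) (hs : s.card = 2) :
      perazzoClass k s ∈ quotientGrade (perazzoF k) 2 :=
    hs ▸ monomialClass_mem_quotientGrade (perazzoF k) s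
  refine le_antisymm ((quotientGrade_eq_span _ 2).trans_le (Submodule.span_le.2 ?_))
    (Submodule.span_le.2 (Set.range_subset_iff.2 fun n ↦ hmem _ (card_perazzoQuadric n)))
  rintro _ ⟨s, hs, rfl⟩
  obtain ⟨i, j, rfl⟩ := Multiset.card_eq_two.1 hs
  change perazzoClass k {i, j} ∈ Submodule.span k _
  rcases notMem_perazzoTerms_or_exists_perazzoQuadric i j with hzero | ⟨n, hn⟩
  · have hclass : perazzoClass k {i, j} = 0 := by
      refine quotientGrade_ext (j := 2) (perazzoF_isHomogeneous k) rfl (hmem _ hs)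
        (zero_mem _) fun t ht ↦ ?_
      obtain ⟨a, b, rfl⟩ := Multiset.card_eq_two.1 ht
      rw [← monomialClass_add, perazzoFunctional_perazzoClass, if_neg (hzero a b), zero_mul,
        map_zero]
    exact hclass ▸ zero_mem _
  · have hclass : perazzoClass k {i, j} = perazzoClass k (perazzoQuadric n) := by
      refine quotientGrade_ext (j := 2) (perazzoF_isHomogeneous k) rfl (hmem _ hs)
        (hmem _ (card_perazzoQuadric n)) fun t ht ↦ ?_
      obtain ⟨a, b, rfl⟩ := Multiset.card_eq_two.1 ht
      simp only [← monomialClass_add, perazzoFunctional_perazzoClass, hn]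
    exact hclass ▸ Submodule.subset_span ⟨n, rfl⟩

lemma finrank_perazzoCGrade_zero : finrank k (perazzoCGrade k 0) = 1 := by
  rw [perazzoCGrade_zero_eq_span]
  refine finrank_span_of_dual (perazzoFunctional k)
    (w := fun _ ↦ perazzoClass k {5, 0, 3, 3}) fun _ _ ↦ ?_
  rw [← monomialClass_add, perazzoFunctional_perazzoClass, if_pos (by decide), if_pos rfl]

lemma finrank_perazzoCGrade_one : finrank k (perazzoCGrade k 1) = 6 := by
  rw [perazzoCGrade_one_eq_span]
  refine finrank_span_of_dual (perazzoFunctional k)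
    (w := fun j ↦ perazzoClass k (perazzoDualCubic j)) fun i j ↦ ?_
  simp only [← monomialClass_add, perazzoFunctional_perazzoClass,
    singleton_add_perazzoDualCubic_mem_iff]

lemma finrank_perazzoCGrade_two : finrank k (perazzoCGrade k 2) = 10 := by
  rw [perazzoCGrade_two_eq_span]
  refine finrank_span_of_dual (perazzoFunctional k)
    (w := fun n ↦ perazzoClass k (perazzoQuadric n.swap)) fun m n ↦ ?_
  simp only [← monomialClass_add, perazzoFunctional_perazzoClass, perazzoQuadric_add_swap_mem_iff]

lemma finrank_perazzoCGrade (d : ℕ) :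
    finrank k (perazzoCGrade k d) = [1, 6, 10, 6, 1].getD d 0 := by
  have hC := perazzoCGrade_isGradedFrobenius k
  match d with
  | 0 => exact finrank_perazzoCGrade_zero k
  | 1 => exact finrank_perazzoCGrade_one k
  | 2 => exact finrank_perazzoCGrade_two k
  | 3 => exact (hC.finrank_eq_of_add_eq (by norm_num)).trans (finrank_perazzoCGrade_one k)
  | 4 => exact (hC.finrank_eq_of_add_eq (by norm_num)).trans (finrank_perazzoCGrade_zero k)
  | d + 5 => exact hC.finrank_eq_zero_of_lt (by omega)

/-- The class of `x + u + v` in `C`, the strong Lefschetz element. -/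
noncomputable def lefschetzElement : MvPolynomial (Fin 6) k ⧸ annIdeal (perazzoF k) :=
  ∑ i ∈ lefschetzSupport, perazzoClass k {i}

lemma lefschetzElement_mem : lefschetzElement k ∈ perazzoCGrade k 1 :=
  Submodule.sum_mem _ fun i _ ↦ monomialClass_mem_quotientGrade (perazzoF k) {i}

lemma perazzoFunctional_lefschetzElement_sq_mul (i j : Fin 6) :
    perazzoFunctional k (lefschetzElement k ^ 2 * perazzoClass k {i} * perazzoClass k {j}) =
      perazzoHessian i j := by
  rw [perazzoHessian_eq_of, Matrix.of_apply, sq, lefschetzElement, Finset.sum_mul_sum]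
  simp only [Finset.sum_mul, ← monomialClass_add, map_sum, perazzoFunctional_perazzoClass]
  push_cast
  rfl

lemma perazzoFunctional_lefschetzElement_pow_four :
    perazzoFunctional k (lefschetzElement k ^ 4) = 12 := by
  calc perazzoFunctional k (lefschetzElement k ^ 4)
      = perazzoFunctional k (lefschetzElement k ^ 2 * ((∑ i ∈ lefschetzSupport,
          perazzoClass k {i}) * ∑ j ∈ lefschetzSupport, perazzoClass k {j})) := by
        rw [← lefschetzElement]
        ring_nf
    _ = ∑ i ∈ lefschetzSupport, ∑ j ∈ lefschetzSupport, (perazzoHessian i j : k) := by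
        simp_rw [Finset.sum_mul_sum, Finset.mul_sum, ← mul_assoc, map_sum,
          perazzoFunctional_lefschetzElement_sq_mul]
    _ = 12 := by exact_mod_cast congrArg (Int.cast : ℤ → k) sum_perazzoHessian

variable {k}

lemma finrank_map_lefschetzElement_pow_four (h12 : (12 : k) ≠ 0) :
    finrank k ((perazzoCGrade k 0).map (LinearMap.mulLeft k (lefschetzElement k ^ 4))) = 1 := by
  rw [perazzoCGrade_zero_eq_span]
  refine finrank_map_mulLeft_span (perazzoFunctional k) (w := fun _ ↦ 1) ?_
  rwa [Matrix.det_unique, Matrix.of_apply, perazzoClass, monomialClass_zero, mul_one, mul_one,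
    perazzoFunctional_lefschetzElement_pow_four]

lemma finrank_map_lefschetzElement_sq (h9 : (9 : k) ≠ 0) :
    finrank k ((perazzoCGrade k 1).map (LinearMap.mulLeft k (lefschetzElement k ^ 2))) = 6 := by
  rw [perazzoCGrade_one_eq_span]
  refine finrank_map_mulLeft_span (perazzoFunctional k) (w := fun j ↦ perazzoClass k {j}) ?_
  have hgram : (Matrix.of fun i j ↦ perazzoFunctional k
      (lefschetzElement k ^ 2 * perazzoClass k {i} * perazzoClass k {j})) =
        (Int.castRingHom k).mapMatrix perazzoHessian := by
    ext i j
    exact perazzoFunctional_lefschetzElement_sq_mul k i j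
  rw [hgram, ← RingHom.map_det, det_perazzoHessian, map_neg, map_ofNat]
  exact neg_ne_zero.2 h9

theorem lefschetzElement_isStrongLefschetz (h6 : (6 : k) ≠ 0) :
    IsStrongLefschetz (perazzoCGrade k) (lefschetzElement k) := by
  have h2 : (2 : k) ≠ 0 := fun h ↦ h6 (by linear_combination 3 * h)
  have h3 : (3 : k) ≠ 0 := fun h ↦ h6 (by linear_combination 2 * h)
  have hC := perazzoCGrade_isGradedFrobenius k
  refine hC.isStrongLefschetz (lefschetzElement_mem k) fun i hi ↦ ?_
  have hi' : i ≤ 2 := by omega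
  interval_cases i
  · rw [finrank_perazzoCGrade]
    exact finrank_map_lefschetzElement_pow_four
      (by rw [show (12 : k) = 2 * 6 by norm_num]; exact mul_ne_zero h2 h6)
  · rw [finrank_perazzoCGrade]
    exact finrank_map_lefschetzElement_sq
      (by rw [show (9 : k) = 3 * 3 by norm_num]; exact mul_ne_zero h3 h3)
  · rw [Nat.sub_self, pow_zero, LinearMap.mulLeft_one, Submodule.map_id]

lemma finrank_ker_lefschetzElement_pow (h6 : (6 : k) ≠ 0) (n : ℕ) :
    finrank k (LinearMap.ker (LinearMap.mulLeft k (lefschetzElement k) ^ n)) =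
      min n 5 + 5 * min n 3 + 4 * min n 1 := by
  rw [(perazzoCGrade_isGradedFrobenius k).finrank_ker_mulLeft_pow (lefschetzElement_mem k)
    (lefschetzElement_isStrongLefschetz h6) n]
  simp only [finrank_perazzoCGrade]
  rcases lt_or_ge n 5 with hn | hn
  · interval_cases n <;> rfl
  · have hzero (i : ℕ) : [1, 6, 10, 6, 1].getD (i + n) 0 = 0 :=
      List.getD_eq_default _ _ (hn.trans (Nat.le_add_left n i))
    simp only [hzero, min_eq_right hn, min_eq_right (show 3 ≤ n by omega),
      min_eq_right (show 1 ≤ n by omega)]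
    rfl

end Perazzo

theorem perazzo_free_extension_strong_lefschetz_general
    (k : Type*) [Field k] (h6 : (6 : k) ≠ 0) :
    (Module.finrank k (perazzoCGrade k 0) = 1 ∧ Module.finrank k (perazzoCGrade k 1) = 6 ∧
      Module.finrank k (perazzoCGrade k 2) = 10 ∧ Module.finrank k (perazzoCGrade k 3) = 6 ∧
      Module.finrank k (perazzoCGrade k 4) = 1 ∧
      ∀ d : ℕ, 4 < d → Module.finrank k (perazzoCGrade k d) = 0) ∧
    ∃ ℓ ∈ perazzoCGrade k 1,
      (∀ i m : ℕ,
        Module.finrank k ((perazzoCGrade k i).map (LinearMap.mulLeft k (ℓ ^ m))) =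
          min (Module.finrank k (perazzoCGrade k i))
            (Module.finrank k (perazzoCGrade k (i + m)))) ∧
      (∀ n : ℕ,
        Module.finrank k (LinearMap.ker ((LinearMap.mulLeft k ℓ) ^ n)) =
          min n 5 + 5 * min n 3 + 4 * min n 1) := by
  have hilbert := finrank_perazzoCGrade k
  exact ⟨⟨hilbert 0, hilbert 1, hilbert 2, hilbert 3, hilbert 4,
      fun _ hd ↦ (perazzoCGrade_isGradedFrobenius k).finrank_eq_zero_of_lt hd⟩,
    lefschetzElement k, lefschetzElement_mem k, lefschetzElement_isStrongLefschetz h6,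
    finrank_ker_lefschetzElement_pow h6⟩

/-- **Example (Example 3.6 / SL2counterex, conclusion).** The standard graded Artinian
Gorenstein algebra `C = k[x,y,z,u,v,t]/Ann(T·(XU²+YUV+ZV²) + X²UV + XYV²)`, with Hilbert
function `(1,6,10,6,1)`, is strong Lefschetz: there is a linear form `ℓ ∈ C₁` all of whose
multiplication maps `×ℓᵐ : Cᵢ → C_{i+m}` have maximal rank, equivalently of Jordan type
`(5,3,3,3,3,3,1,1,1,1)`, the conjugate of the Hilbert function.  (This answers Watanabe's
question in the standard graded case: `C` is a strong Lefschetz free extension of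
`k[t]/(t²)` whose fiber `B` is not strong Lefschetz.) -/
theorem perazzo_free_extension_strong_lefschetz
    (k : Type*) [Field k] [CharZero k] :
    (Module.finrank k (perazzoCGrade k 0) = 1 ∧ Module.finrank k (perazzoCGrade k 1) = 6 ∧
      Module.finrank k (perazzoCGrade k 2) = 10 ∧ Module.finrank k (perazzoCGrade k 3) = 6 ∧
      Module.finrank k (perazzoCGrade k 4) = 1 ∧
      ∀ d : ℕ, 4 < d → Module.finrank k (perazzoCGrade k d) = 0) ∧
    ∃ ℓ ∈ perazzoCGrade k 1,
      (∀ i m : ℕ,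
        Module.finrank k ((perazzoCGrade k i).map (LinearMap.mulLeft k (ℓ ^ m))) =
          min (Module.finrank k (perazzoCGrade k i))
            (Module.finrank k (perazzoCGrade k (i + m)))) ∧
      (∀ n : ℕ,
        Module.finrank k (LinearMap.ker ((LinearMap.mulLeft k ℓ) ^ n)) =
          min n 5 + 5 * min n 3 + 4 * min n 1) := by
  exact perazzo_free_extension_strong_lefschetz_general k (by norm_num)
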